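/- Let d ≥ 1, l ∈ ℕ, α = (α₁,…,α_d) with 1 ≤ α₁ ≤ α₂ ≤ … ≤ α_d and l ≥ ⌊α_d⌋, and L = (L₁,…,L_d) ∈ (0,∞)^d. Let g : ℝ^d → ℝ belong to the anisotropic Hölder class H_d(α, L). Let u = (u_0,…,u_l) ∈ ℝ^{l+1} satisfy, for every k ∈ {0,…,l}, ∑_{i=0}^{l} u_i ( ∑_{j=0}^{k} (−1)^j m_j i^{k−j} / (j!(k−j)!) ) = 1 if k = 0 and = 0 otherwise, where m_j is the j-th moment of the standard real Gaussian, and for a multi-index γ = (γ₁,…,γ_d) ∈ {0,…,l}^d set u_γ = ∏_{i=1}^d u_{γ_i}. Then there exists a constant C > 0, depending only on d, l, α and L, such that for every x ∈ ℝ^d and every τ > 0: | ∑_{γ ∈ {0,…,l}^d} u_γ ∫_{ℝ^d} g(x + τ(γ − z)) dΓ(z) − g(x) | ≤ C ∑_{i=1}^{d} τ^{α_i}. -/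

import Mathlib

open MeasureTheory ProbabilityTheory

/-- The iterated partial derivative `∂_i^k g (x)` of `g : ℝ^d → ℝ` in the direction of
the `i`-th canonical basis vector, defined as the `k`-th derivative at `0` of
`t ↦ g (x + t e_i)`. -/
noncomputable def partialDerivIter (d : ℕ) (g : (Fin d → ℝ) → ℝ) (i : Fin d) (k : ℕ)
    (x : Fin d → ℝ) : ℝ :=
  iteratedDeriv k (fun t : ℝ => g (x + t • (Pi.single i 1 : Fin d → ℝ))) 0

/-- `g : ℝ^d → ℝ` belongs to the anisotropic Hölder class `H_d(α, L)`. -/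
def IsAnisotropicHolder (d : ℕ) (α L : Fin d → ℝ) (g : (Fin d → ℝ) → ℝ) : Prop :=
  ∀ i : Fin d,
    (∀ x : Fin d → ℝ, ∀ k < ⌊α i⌋₊,
        Differentiable ℝ (iteratedDeriv k (fun t : ℝ => g (x + t • (Pi.single i 1 : Fin d → ℝ))))) ∧
    (∀ k ≤ ⌊α i⌋₊, ∀ x : Fin d → ℝ, |partialDerivIter d g i k x| ≤ L i) ∧
    (∀ (t : ℝ) (x : Fin d → ℝ),
        |partialDerivIter d g i ⌊α i⌋₊ (x + t • (Pi.single i 1 : Fin d → ℝ)) -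
            partialDerivIter d g i ⌊α i⌋₊ x| ≤ L i * |t| ^ (α i - (⌊α i⌋₊ : ℝ)))

/-!
Averaging `g` over the shifts and over the noise is integration against the `d`-fold product of
the one-dimensional signed measure `∑ j, u j • law (τ (j - ζ))`. By the binomial theorem the
moment system says exactly that this measure has the moments of the Dirac mass at `0` up to order
`l`, so in one dimension it integrates the Taylor polynomial of `g` to its value at `0` and only
the Hölder remainder, of size `τ ^ α i` in direction `i`, survives. Replacing the factors of the
product by Dirac masses one at a time sums these errors, up to powers of the total variation `∑ j,
|u j|`. The system is triangular in the power sums of the nodes, so it determines `u` by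
Vandermonde, and the constant does not depend on `u`.
-/

section Taylor

variable {E : Type*} [NormedAddCommGroup E] [NormedSpace ℝ E]

lemma norm_sub_taylorWithinEval_le_of_holder {f : ℝ → E} {m : ℕ} {β K x₀ : ℝ} (hβ : 0 ≤ β)
    (hf : ∀ k < m, Differentiable ℝ (iteratedDeriv k f))
    (hK : ∀ x, ‖iteratedDeriv m f x - iteratedDeriv m f x₀‖ ≤ K * |x - x₀| ^ β) (x : ℝ) :
    ‖f x - taylorWithinEval f m Set.univ x₀ x‖ ≤ K * |x - x₀| ^ (m + β) := by
  have hK0 : 0 ≤ K := by simpa using (norm_nonneg _).trans (hK (x₀ + 1))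
  induction m generalizing f x with
  | zero => simpa using hK x
  | succ m ih =>
    have hderiv (y : ℝ) (hy : y ∈ Set.uIcc x₀ x) :
        ‖deriv f y - taylorWithinEval (deriv f) m Set.univ x₀ y‖ ≤ K * |x - x₀| ^ (m + β) := by
      have hyx : |y - x₀| ≤ |x - x₀| := Set.abs_sub_left_of_mem_uIcc hy
      refine (ih (fun k hk => ?_) (by simpa only [iteratedDeriv_succ'] using hK) y).trans
        (by gcongr)
      simpa only [iteratedDeriv_succ'] using hf (k + 1) (by lia)
    have hremainder (y : ℝ) : HasDerivAt (fun y => f y - taylorWithinEval f (m + 1) Set.univ x₀ y)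
        (deriv f y - taylorWithinEval (deriv f) m Set.univ x₀ y) y := by
      have hfy : DifferentiableAt ℝ f y := by simpa using hf 0 m.succ_pos y
      simpa only [derivWithin_univ] using!
        hfy.hasDerivAt.sub (hasDerivAt_taylorWithinEval_succ (s := Set.univ) f m)
    have hmean := (convex_uIcc x₀ x).norm_image_sub_le_of_norm_hasDerivWithin_le
      (fun y _ => (hremainder y).hasDerivWithinAt) hderiv Set.left_mem_uIcc Set.right_mem_uIcc
    rw [taylorWithinEval_self, sub_self, sub_zero, Real.norm_eq_abs] at hmean
    have hpow : |x - x₀| ^ (m + β) * |x - x₀| = |x - x₀| ^ ((m + 1 : ℕ) + β) := by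
      rw [← Real.rpow_add_one' (abs_nonneg _) (by positivity)]
      push_cast
      ring_nf
    rwa [mul_assoc, hpow] at hmean

end Taylor

section SeparateModulus

variable {ι : Type*} [DecidableEq ι]

lemma abs_piecewise_sub_le {g : (ι → ℝ) → ℝ} {w : ι → ℝ → ℝ}
    (hg : ∀ i x t, |g (Function.update x i t) - g x| ≤ w i (t - x i)) (x y : ι → ℝ)
    (s : Finset ι) : |g (s.piecewise y x) - g x| ≤ ∑ i ∈ s, w i (y i - x i) := by
  induction s using Finset.induction_on with
  | empty => simp
  | insert j s hj ih =>
    rw [Finset.piecewise_insert, Finset.sum_insert hj]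
    have hstep := hg j (s.piecewise y x) (y j)
    rw [Finset.piecewise_eq_of_notMem _ _ _ hj] at hstep
    exact (abs_sub_le _ _ _).trans (add_le_add hstep ih)

lemma continuous_of_abs_update_sub_le [Finite ι] {g : (ι → ℝ) → ℝ} {w : ι → ℝ → ℝ}
    (hg : ∀ i x t, |g (Function.update x i t) - g x| ≤ w i (t - x i))
    (hw : ∀ i, Filter.Tendsto (w i) (nhds 0) (nhds 0)) : Continuous g := by
  cases nonempty_fintype ι
  refine continuous_iff_continuousAt.2 fun x => tendsto_iff_dist_tendsto_zero.2 ?_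
  have hmodulus : Filter.Tendsto (fun y => ∑ i, w i (y i - x i)) (nhds x) (nhds 0) := by
    rw [← Finset.sum_const_zero (s := (Finset.univ : Finset ι))]
    refine tendsto_finsetSum _ fun i _ => (hw i).comp ?_
    have hsub : Continuous fun y : ι → ℝ => y i - x i := by fun_prop
    simpa using hsub.tendsto x
  refine squeeze_zero (fun _ => dist_nonneg) (fun y => ?_) hmodulus
  simpa [Real.dist_eq] using abs_piecewise_sub_le hg x y Finset.univ

end SeparateModulus

section Mixture

variable {ι E : Type*} [Fintype ι] [MeasurableSpace E]

/-- The integral of `f` against the signed mixture `∑ j, u j • ν j` of measures. -/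
noncomputable def mixtureIntegral (u : ι → ℝ) (ν : ι → Measure E) (f : E → ℝ) : ℝ :=
  ∑ j, u j * ∫ y, f y ∂ν j

/-- The integral of `g` against the `n`-fold product of the signed mixture `∑ j, u j • ν j`,
expanded as a mixture of product measures indexed by `Fin n → ι`. -/
noncomputable def mixtureIntegralPi {n : ℕ} (u : ι → ℝ) (ν : ι → Measure E)
    (g : (Fin n → E) → ℝ) : ℝ :=
  mixtureIntegral (fun γ : Fin n → ι => ∏ i, u (γ i)) (fun γ => Measure.pi fun i => ν (γ i)) g

lemma mixtureIntegral_sub {u : ι → ℝ} {ν : ι → Measure E} {f₁ f₂ : E → ℝ}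
    (h₁ : ∀ j, Integrable f₁ (ν j)) (h₂ : ∀ j, Integrable f₂ (ν j)) :
    mixtureIntegral u ν (fun y => f₁ y - f₂ y) =
      mixtureIntegral u ν f₁ - mixtureIntegral u ν f₂ := by
  simp only [mixtureIntegral, integral_sub (h₁ _) (h₂ _), mul_sub, Finset.sum_sub_distrib]

lemma mixtureIntegral_sum {κ : Type*} {s : Finset κ} {u : ι → ℝ} {ν : ι → Measure E}
    {f : κ → E → ℝ} (hf : ∀ k ∈ s, ∀ j, Integrable (f k) (ν j)) :
    mixtureIntegral u ν (fun y => ∑ k ∈ s, f k y) = ∑ k ∈ s, mixtureIntegral u ν (f k) := by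
  simp only [mixtureIntegral, integral_finsetSum s fun k hk => hf k hk _, Finset.mul_sum]
  exact Finset.sum_comm

lemma mixtureIntegral_const_mul (u : ι → ℝ) (ν : ι → Measure E) (a : ℝ) (f : E → ℝ) :
    mixtureIntegral u ν (fun y => a * f y) = a * mixtureIntegral u ν f := by
  simp only [mixtureIntegral, integral_const_mul, Finset.mul_sum, mul_left_comm]

lemma mixtureIntegral_const (u : ι → ℝ) (ν : ι → Measure E) [∀ j, IsProbabilityMeasure (ν j)]
    (a : ℝ) : mixtureIntegral u ν (fun _ => a) = (∑ j, u j) * a := by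
  simp [mixtureIntegral, Finset.sum_mul]

lemma abs_mixtureIntegral_le {u : ι → ℝ} {ν : ι → Measure E} {f F : E → ℝ}
    (hF : ∀ j, Integrable F (ν j)) (hfF : ∀ y, |f y| ≤ F y) :
    |mixtureIntegral u ν f| ≤ mixtureIntegral (fun j => |u j|) ν F := by
  refine (Finset.abs_sum_le_sum_abs _ _).trans (Finset.sum_le_sum fun j _ => ?_)
  have hintegral : |∫ y, f y ∂ν j| ≤ ∫ y, F y ∂ν j := by
    rw [← Real.norm_eq_abs]
    exact norm_integral_le_of_norm_le (hF j) (.of_forall hfF)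
  rw [abs_mul]
  gcongr

end Mixture

section Tensorization

variable {E : Type*} [MeasurableSpace E] {n : ℕ}

lemma measurable_finCons :
    Measurable fun p : E × (Fin n → E) => (Fin.cons p.1 p.2 : Fin (n + 1) → E) :=
  measurable_pi_lambda _ <| Fin.cases measurable_fst fun i => by
    simpa only [Fin.cons_succ] using measurable_snd.eval

lemma measurable_finCons_left (a : E) :
    Measurable fun y : Fin n → E => (Fin.cons a y : Fin (n + 1) → E) :=
  measurable_finCons.comp measurable_prodMk_left

lemma measurable_finCons_right (y : Fin n → E) :
    Measurable fun a : E => (Fin.cons a y : Fin (n + 1) → E) :=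
  measurable_finCons.comp measurable_prodMk_right

lemma integrable_of_abs_le {μ : Measure E} [IsFiniteMeasure μ] {f : E → ℝ} {M : ℝ}
    (hf : Measurable f) (hM : ∀ y, |f y| ≤ M) : Integrable f μ :=
  .of_bound hf.aestronglyMeasurable M (.of_forall hM)

lemma integral_pi_finSucc (μ : Fin (n + 1) → Measure E) [∀ i, SigmaFinite (μ i)]
    {g : (Fin (n + 1) → E) → ℝ} (hg : Integrable g (Measure.pi μ)) :
    ∫ y, g y ∂Measure.pi μ =
      ∫ a, ∫ y, g (Fin.cons a y) ∂(Measure.pi fun i : Fin n => μ i.succ) ∂μ 0 := by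
  have hsplit := (measurePreserving_piFinSuccAbove μ 0).symm
  rw [← hsplit.integral_comp']
  refine (integral_prod _ (hsplit.integrable_comp_of_integrable hg)).trans ?_
  simp only [MeasurableEquiv.piFinSuccAbove_symm_apply, Fin.insertNthEquiv_zero,
    Fin.zero_succAbove]
  rfl

variable {ι : Type*} [Fintype ι] {u : ι → ℝ} {ν : ι → Measure E} [∀ j, IsProbabilityMeasure (ν j)]

lemma measurable_mixtureIntegralPi_finCons {g : (Fin (n + 1) → E) → ℝ} (hg : Measurable g) :
    Measurable fun a => mixtureIntegralPi u ν fun y : Fin n → E => g (Fin.cons a y) := by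
  refine Finset.measurable_sum _ fun γ _ => Measurable.const_mul ?_ _
  exact (hg.comp measurable_finCons).stronglyMeasurable.integral_prod_right'.measurable

lemma mixtureIntegralPi_finSucc {g : (Fin (n + 1) → E) → ℝ} {M : ℝ} (hg : Measurable g)
    (hM : ∀ y, |g y| ≤ M) :
    mixtureIntegralPi u ν g =
      mixtureIntegral u ν fun a => mixtureIntegralPi u ν fun y : Fin n → E => g (Fin.cons a y) := by
  have hint (γ : Fin n → ι) (j : ι) :
      Integrable (fun a => ∫ y, g (Fin.cons a y) ∂(Measure.pi fun i => ν (γ i))) (ν j) :=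
    (integrable_of_abs_le (μ := (ν j).prod (Measure.pi fun i => ν (γ i)))
      (hg.comp measurable_finCons) fun _ => hM _).integral_prod_left
  rw [mixtureIntegralPi, mixtureIntegral, ← (Fin.consEquiv fun _ => ι).sum_comp,
    Fintype.sum_prod_type]
  refine Finset.sum_congr rfl fun j _ => ?_
  simp only [mixtureIntegralPi, mixtureIntegral]
  rw [integral_finsetSum _ fun γ _ => (hint γ j).const_mul _, Finset.mul_sum]
  refine Finset.sum_congr rfl fun γ _ => ?_
  rw [integral_const_mul, integral_pi_finSucc _ (integrable_of_abs_le hg hM), Fin.prod_univ_succ]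
  simp [mul_assoc]

/-- Replace the coordinates one at a time: the first one costs `B 0`, and the error made on the
others is averaged by the signed mixture, whose total variation is at most `∑ j, |u j|`. -/
theorem abs_mixtureIntegralPi_sub_le (hu : 1 ≤ ∑ j, |u j|) {g : (Fin n → E) → ℝ} {M : ℝ}
    (hg : Measurable g) (hM : ∀ y, |g y| ≤ M) {e : Fin n → E} {B : Fin n → ℝ}
    (hB : ∀ i y, |mixtureIntegral u ν (fun a => g (Function.update y i a)) -
      g (Function.update y i (e i))| ≤ B i) :
    |mixtureIntegralPi u ν g - g e| ≤ (∑ j, |u j|) ^ n * ∑ i, B i := by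
  induction n with
  | zero =>
    have hconst : g = fun _ => g e := funext fun y => by rw [Subsingleton.elim y e]
    rw [hconst, mixtureIntegralPi, mixtureIntegral_const]
    simp
  | succ n ih =>
    set G : E → ℝ := fun a => mixtureIntegralPi u ν fun y : Fin n → E => g (Fin.cons a y)
    set g₀ : E → ℝ := fun a => g (Fin.cons a (Fin.tail e))
    set D := (∑ j, |u j|) ^ n * ∑ i : Fin n, B i.succ with hD
    have hG (a : E) : |G a - g₀ a| ≤ D :=
      ih (hg.comp (measurable_finCons_left a)) (fun y => hM _) fun i y => by
        simpa only [Function.comp_apply, Fin.tail, Fin.cons_update] using hB i.succ (Fin.cons a y)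
    have hg₀_int (j : ι) : Integrable g₀ (ν j) :=
      integrable_of_abs_le (hg.comp (measurable_finCons_right _)) fun _ => hM _
    have hG_int (j : ι) : Integrable G (ν j) :=
      integrable_of_abs_le (measurable_mixtureIntegralPi_finCons hg) fun a =>
        calc |G a| ≤ |G a - g₀ a| + |g₀ a| := by simpa using abs_sub_le (G a) (g₀ a) 0
          _ ≤ D + M := add_le_add (hG a) (hM _)
    have htail : |mixtureIntegral u ν G - mixtureIntegral u ν g₀| ≤ (∑ j, |u j|) * D := by
      rw [← mixtureIntegral_sub hG_int hg₀_int, ← mixtureIntegral_const _ ν]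
      exact abs_mixtureIntegral_le (fun _ => integrable_const D) hG
    have hhead : |mixtureIntegral u ν g₀ - g e| ≤ B 0 := by
      have hupdate (a : E) : Function.update e 0 a = Fin.cons a (Fin.tail e) := by
        rw [← Fin.update_cons_zero (e 0), Fin.cons_self_tail]
      simpa only [hupdate, Fin.cons_self_tail] using hB 0 e
    have hB0 : B 0 ≤ (∑ j, |u j|) ^ (n + 1) * B 0 :=
      le_mul_of_one_le_left ((abs_nonneg _).trans hhead) (one_le_pow₀ hu)
    calc |mixtureIntegralPi u ν g - g e|
        ≤ (∑ j, |u j|) * D + B 0 := by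
          rw [mixtureIntegralPi_finSucc hg hM]
          exact (abs_sub_le _ _ _).trans (add_le_add htail hhead)
      _ ≤ (∑ j, |u j|) * D + (∑ j, |u j|) ^ (n + 1) * B 0 := by gcongr
      _ = (∑ j, |u j|) ^ (n + 1) * ∑ i, B i := by rw [hD, Fin.sum_univ_succ]; ring

end Tensorization

section DiracMoments

variable {ι : Type*} [Fintype ι] {u : ι → ℝ} {ν : ι → Measure ℝ}

lemma integrable_taylorWithinEval {μ : Measure ℝ} {m : ℕ}
    (hμ : ∀ k ≤ m, Integrable (fun y : ℝ => y ^ k) μ) (f : ℝ → ℝ) (s : Set ℝ) :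
    Integrable (taylorWithinEval f m s 0) μ := by
  refine (integrable_finsetSum (Finset.range (m + 1)) fun k hk =>
    (hμ k (Finset.mem_range_succ_iff.1 hk)).const_mul
      ((k.factorial : ℝ)⁻¹ * iteratedDerivWithin k f s 0)).congr (.of_forall fun y => ?_)
  simp only [taylor_within_apply, sub_zero, smul_eq_mul, mul_right_comm]

lemma mixtureIntegral_taylorWithinEval {m : ℕ}
    (hν : ∀ k ≤ m, ∀ j, Integrable (fun y : ℝ => y ^ k) (ν j))
    (hmom : ∀ k ≤ m, mixtureIntegral u ν (fun y => y ^ k) = 0 ^ k) (f : ℝ → ℝ) (s : Set ℝ) :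
    mixtureIntegral u ν (taylorWithinEval f m s 0) = f 0 := by
  set a : ℕ → ℝ := fun k => (k.factorial : ℝ)⁻¹ * iteratedDerivWithin k f s 0
  have htaylor (y : ℝ) :
      taylorWithinEval f m s 0 y = ∑ k ∈ Finset.range (m + 1), a k * y ^ k := by
    simp only [taylor_within_apply, sub_zero, smul_eq_mul, mul_right_comm, a]
  calc mixtureIntegral u ν (taylorWithinEval f m s 0)
      = mixtureIntegral u ν (fun y => ∑ k ∈ Finset.range (m + 1), a k * y ^ k) := by
        rw [← funext htaylor]
    _ = ∑ k ∈ Finset.range (m + 1), a k * mixtureIntegral u ν (fun y => y ^ k) := by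
        rw [mixtureIntegral_sum fun k hk j =>
          (hν k (Finset.mem_range_succ_iff.1 hk) j).const_mul (a k)]
        simp only [mixtureIntegral_const_mul]
    _ = ∑ k ∈ Finset.range (m + 1), a k * 0 ^ k :=
        Finset.sum_congr rfl fun k hk => by rw [hmom k (Finset.mem_range_succ_iff.1 hk)]
    _ = f 0 := by rw [← htaylor, taylorWithinEval_self]

lemma integrable_pow_of_memLp_id {μ : Measure ℝ} [IsFiniteMeasure μ] {α : ℝ} {k : ℕ}
    (hk : (k : ℝ) ≤ α) (hμ : MemLp id (ENNReal.ofReal α) μ) :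
    Integrable (fun y : ℝ => y ^ k) μ := by
  have hkα : (k : ENNReal) ≤ ENNReal.ofReal α := by
    simpa using ENNReal.ofReal_le_ofReal hk
  exact (hμ.mono_exponent hkα).integrable_norm_pow'.mono (by fun_prop) (by simp)

theorem abs_mixtureIntegral_sub_le_of_holder [∀ j, IsFiniteMeasure (ν j)] {m : ℕ} {α K : ℝ}
    (hα : (m : ℝ) ≤ α) (hν : ∀ j, MemLp id (ENNReal.ofReal α) (ν j))
    (hmom : ∀ k ≤ m, mixtureIntegral u ν (fun y => y ^ k) = 0 ^ k)
    {f : ℝ → ℝ} (hf_int : ∀ j, Integrable f (ν j))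
    (hf : ∀ k < m, Differentiable ℝ (iteratedDeriv k f))
    (hK : ∀ t, |iteratedDeriv m f t - iteratedDeriv m f 0| ≤ K * |t| ^ (α - m)) :
    |mixtureIntegral u ν f - f 0| ≤
      K * mixtureIntegral (fun j => |u j|) ν (fun y => |y| ^ α) := by
  have hpow_int (k : ℕ) (hk : k ≤ m) (j : ι) : Integrable (fun y : ℝ => y ^ k) (ν j) :=
    integrable_pow_of_memLp_id ((Nat.cast_le.2 hk).trans hα) (hν j)
  have habs_int (j : ι) : Integrable (fun y => |y| ^ α) (ν j) := by
    simpa [ENNReal.toReal_ofReal (m.cast_nonneg.trans hα)] using (hν j).integrable_norm_rpow'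
  have hremainder (y : ℝ) : |f y - taylorWithinEval f m Set.univ 0 y| ≤ K * |y| ^ α := by
    simpa using norm_sub_taylorWithinEval_le_of_holder (x₀ := 0) (sub_nonneg.2 hα) hf
      (by simpa using hK) y
  rw [← mixtureIntegral_taylorWithinEval hpow_int hmom f Set.univ,
    ← mixtureIntegral_sub hf_int fun j =>
      integrable_taylorWithinEval (fun k hk => hpow_int k hk j) _ _,
    ← mixtureIntegral_const_mul]
  exact abs_mixtureIntegral_le (fun j => (habs_int j).const_mul K) hremainder

end DiracMoments

lemma update_eq_add_smul_single {ι : Type*} [DecidableEq ι] (x : ι → ℝ) (i : ι) (t : ℝ) :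
    Function.update x i t = x + (t - x i) • (Pi.single i 1 : ι → ℝ) := by
  ext j
  by_cases h : j = i
  · subst h; simp
  · simp [h]

lemma partialDerivIter_add_smul_single {d : ℕ} (g : (Fin d → ℝ) → ℝ) (i : Fin d) (k : ℕ)
    (x : Fin d → ℝ) (t : ℝ) :
    partialDerivIter d g i k (x + t • (Pi.single i 1 : Fin d → ℝ)) =
      iteratedDeriv k (fun s : ℝ => g (x + s • (Pi.single i 1 : Fin d → ℝ))) t := by
  have hshift := congrFun (iteratedDeriv_comp_const_add k
    (fun s : ℝ => g (x + s • (Pi.single i 1 : Fin d → ℝ))) t) 0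
  rw [add_zero] at hshift
  simp only [← hshift, partialDerivIter, add_smul, add_assoc]

namespace IsAnisotropicHolder

variable {d : ℕ} {α L : Fin d → ℝ} {g : (Fin d → ℝ) → ℝ}

lemma abs_le (hg : IsAnisotropicHolder d α L g) (i : Fin d) (x : Fin d → ℝ) : |g x| ≤ L i := by
  simpa [partialDerivIter] using (hg i).2.1 0 (Nat.zero_le _) x

lemma exists_abs_le (hg : IsAnisotropicHolder d α L g) : ∃ M, ∀ x, |g x| ≤ M := by
  rcases isEmpty_or_nonempty (Fin d) with _ | ⟨⟨i⟩⟩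
  · exact ⟨|g 0|, fun x => by rw [Subsingleton.elim x 0]⟩
  · exact ⟨L i, hg.abs_le i⟩

lemma abs_add_smul_single_sub_le (hg : IsAnisotropicHolder d α L g) (i : Fin d)
    (x : Fin d → ℝ) (t : ℝ) :
    |g (x + t • (Pi.single i 1 : Fin d → ℝ)) - g x| ≤ L i * |t| ^ min 1 (α i) := by
  obtain ⟨hdiff, hbound, hholder⟩ := hg i
  rcases lt_or_ge (α i) 1 with hα | hα
  · have hfloor : ⌊α i⌋₊ = 0 := Nat.floor_eq_zero.2 hα
    simpa [hfloor, partialDerivIter, min_eq_right hα.le] using hholder t x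
  · have hfloor : 1 ≤ ⌊α i⌋₊ := (Nat.one_le_floor_iff _).2 hα
    have hline : Differentiable ℝ fun s : ℝ => g (x + s • (Pi.single i 1 : Fin d → ℝ)) := by
      simpa using hdiff x 0 hfloor
    have hderiv (s : ℝ) :
        ‖deriv (fun s : ℝ => g (x + s • (Pi.single i 1 : Fin d → ℝ))) s‖ ≤ L i := by
      rw [← iteratedDeriv_one, ← partialDerivIter_add_smul_single]
      exact hbound 1 hfloor _
    simpa [min_eq_left hα] using convex_univ.norm_image_sub_le_of_norm_deriv_le
      (fun s _ => hline s) (fun s _ => hderiv s) (Set.mem_univ 0) (Set.mem_univ t)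

lemma continuous (hg : IsAnisotropicHolder d α L g) (hα : ∀ i, 0 < α i) : Continuous g := by
  refine continuous_of_abs_update_sub_le (w := fun i t => L i * |t| ^ min 1 (α i))
    (fun i x t => ?_) fun i => ?_
  · rw [update_eq_add_smul_single]
    exact hg.abs_add_smul_single_sub_le i x (t - x i)
  · have hmin : 0 < min 1 (α i) := lt_min one_pos (hα i)
    have hcont : Continuous fun t : ℝ => L i * |t| ^ min 1 (α i) :=
      continuous_const.mul (continuous_abs.rpow_const fun _ => .inr hmin.le)
    simpa [Real.zero_rpow hmin.ne'] using hcont.tendsto 0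

theorem abs_mixtureIntegralPi_add_sub_le (hg : IsAnisotropicHolder d α L g)
    (hα : ∀ i, 0 < α i) {l : ℕ} (hl : ∀ i, ⌊α i⌋₊ ≤ l) {ι : Type*} [Fintype ι] {u : ι → ℝ}
    {ν : ι → Measure ℝ} [∀ j, IsProbabilityMeasure (ν j)]
    (hν : ∀ i j, MemLp id (ENNReal.ofReal (α i)) (ν j))
    (hmom : ∀ k ≤ l, mixtureIntegral u ν (fun y => y ^ k) = 0 ^ k) (x : Fin d → ℝ) :
    |mixtureIntegralPi u ν (fun y => g (x + y)) - g x| ≤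
      (∑ j, |u j|) ^ d *
        ∑ i, L i * mixtureIntegral (fun j => |u j|) ν (fun y => |y| ^ α i) := by
  obtain ⟨M, hM⟩ := hg.exists_abs_le
  have hcont : Continuous g := hg.continuous hα
  have hmass : ∑ j, u j = 1 := by simpa [mixtureIntegral] using hmom 0 l.zero_le
  have hvar : 1 ≤ ∑ j, |u j| := by
    simpa [hmass] using Finset.abs_sum_le_sum_abs u Finset.univ
  suffices hcoord : ∀ i (y : Fin d → ℝ),
      |mixtureIntegral u ν (fun a => g (x + Function.update y i a)) -
        g (x + Function.update y i 0)| ≤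
      L i * mixtureIntegral (fun j => |u j|) ν (fun y => |y| ^ α i) by
    have hmeas : Measurable fun y => g (x + y) :=
      (hcont.comp (continuous_const_add x)).measurable
    simpa using abs_mixtureIntegralPi_sub_le (e := 0) hvar hmeas (fun y => hM _) hcoord
  intro i y
  set x' := x + Function.update y i 0
  have hline (t : ℝ) :
      x + Function.update y i t = x' + t • (Pi.single i 1 : Fin d → ℝ) := by
    simpa [x', add_assoc] using update_eq_add_smul_single (Function.update y i 0) i t
  have hcont_line : Continuous fun t : ℝ => g (x' + t • (Pi.single i 1 : Fin d → ℝ)) := by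
    fun_prop
  obtain ⟨hdiff, -, hholder⟩ := hg i
  have hbound := abs_mixtureIntegral_sub_le_of_holder (Nat.floor_le (hα i).le) (hν i)
    (fun k hk => hmom k (hk.trans (hl i)))
    (fun j => integrable_of_abs_le hcont_line.measurable fun _ => hM _) (hdiff x')
    (fun t => by simpa only [partialDerivIter_add_smul_single] using! hholder t x')
  simpa [hline] using hbound

end IsAnisotropicHolder

section MomentSystem

/-- `∑ⱼ (-1)ʲ mⱼ a^(k-j) / (j! (k-j)!)` for `j ≤ k`, with `mⱼ` the moments of `μ`: by the binomial
theorem this is `𝔼[(a - ζ)^k] / k!` for `ζ` of law `μ`. -/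
noncomputable def shiftedMoment (μ : Measure ℝ) (a : ℝ) (k : ℕ) : ℝ :=
  ∑ j ∈ Finset.range (k + 1),
    (-1 : ℝ) ^ j * (∫ z : ℝ, z ^ j ∂μ) * a ^ (k - j) /
      ((Nat.factorial j : ℝ) * (Nat.factorial (k - j) : ℝ))

/-- The weights `u` at the nodes `c` solve the debiasing moment system of `μ`: the signed mixture
of the laws of `c i - ζ`, `ζ ∼ μ`, has mass one and vanishing moments of orders `1, …, l`. -/
def SolvesMomentSystem (μ : Measure ℝ) {l : ℕ} (c u : Fin (l + 1) → ℝ) : Prop :=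
  ∀ k : Fin (l + 1), ∑ i, u i * shiftedMoment μ (c i) k.val = if k.val = 0 then 1 else 0

variable {μ : Measure ℝ}

lemma shiftedMoment_eq_integral_div {k : ℕ} (hμ : ∀ j ≤ k, Integrable (fun z : ℝ => z ^ j) μ)
    (a : ℝ) : shiftedMoment μ a k = (∫ z, (a - z) ^ k ∂μ) / k.factorial := by
  have hbinom (z : ℝ) : (a - z) ^ k =
      ∑ j ∈ Finset.range (k + 1), (-1) ^ j * a ^ (k - j) * k.choose j * z ^ j := by
    rw [sub_eq_neg_add, add_pow]
    exact Finset.sum_congr rfl fun j _ => by rw [neg_pow]; ring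
  simp only [hbinom]
  rw [integral_finsetSum _ fun j hj => (hμ j (Finset.mem_range_succ_iff.1 hj)).const_mul _,
    Finset.sum_div]
  refine Finset.sum_congr rfl fun j hj => ?_
  rw [integral_const_mul, Nat.cast_choose ℝ (Finset.mem_range_succ_iff.1 hj)]
  field_simp

lemma shiftedMoment_eq_add [IsProbabilityMeasure μ] (a : ℝ) (k : ℕ) :
    shiftedMoment μ a k = a ^ k / k.factorial + ∑ j ∈ Finset.range k,
      (-1) ^ (j + 1) * (∫ z, z ^ (j + 1) ∂μ) / ((j + 1).factorial * (k - (j + 1)).factorial) *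
        a ^ (k - (j + 1)) := by
  rw [shiftedMoment, Finset.sum_range_succ', add_comm]
  congr 1
  · simp
  · exact Finset.sum_congr rfl fun j _ => by ring

/-- By `shiftedMoment_eq_add` the system is triangular in the power sums `∑ i, w i * c i ^ k`. -/
lemma sum_mul_pow_eq_zero [IsProbabilityMeasure μ] {ι : Type*} [Fintype ι] {c w : ι → ℝ} {l : ℕ}
    (hw : ∀ k ≤ l, ∑ i, w i * shiftedMoment μ (c i) k = 0) :
    ∀ k ≤ l, ∑ i, w i * c i ^ k = 0 := by
  intro k
  induction k using Nat.strong_induction_on with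
  | _ k ih =>
    intro hk
    have hlower : ∑ i, w i * ∑ j ∈ Finset.range k,
        (-1) ^ (j + 1) * (∫ z, z ^ (j + 1) ∂μ) / ((j + 1).factorial * (k - (j + 1)).factorial) *
          c i ^ (k - (j + 1)) = 0 := by
      simp only [Finset.mul_sum, mul_left_comm (w _)]
      rw [Finset.sum_comm]
      refine Finset.sum_eq_zero fun j hj => ?_
      have := Finset.mem_range.1 hj
      rw [← Finset.mul_sum, ih (k - (j + 1)) (by lia) (by lia), mul_zero]
    have hk_eq := hw k hk
    simp only [shiftedMoment_eq_add, mul_add, Finset.sum_add_distrib, hlower, add_zero,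
      mul_div_assoc', ← Finset.sum_div] at hk_eq
    exact (div_eq_zero_iff.1 hk_eq).resolve_right (by positivity)

variable {l : ℕ} {c u : Fin (l + 1) → ℝ}

namespace SolvesMomentSystem

lemma eq [IsProbabilityMeasure μ] {v : Fin (l + 1) → ℝ} (hc : Function.Injective c)
    (hu : SolvesMomentSystem μ c u) (hv : SolvesMomentSystem μ c v) : u = v := by
  have hhom : ∀ k ≤ l, ∑ i, (u - v) i * shiftedMoment μ (c i) k = 0 := fun k hk => by
    simp only [Pi.sub_apply, sub_mul, Finset.sum_sub_distrib]
    rw [hu ⟨k, by lia⟩, hv ⟨k, by lia⟩, sub_self]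
  exact sub_eq_zero.1 <| Matrix.eq_zero_of_forall_pow_sum_mul_pow_eq_zero hc fun k =>
    sum_mul_pow_eq_zero hhom k (by lia)

lemma sum_mul_integral_pow (hu : SolvesMomentSystem μ c u)
    (hμ : ∀ k ≤ l, Integrable (fun z : ℝ => z ^ k) μ) {k : ℕ} (hk : k ≤ l) :
    ∑ i, u i * ∫ z, (c i - z) ^ k ∂μ = 0 ^ k := by
  have hk_eq := hu ⟨k, by lia⟩
  simp only [shiftedMoment_eq_integral_div fun j hj => hμ j (hj.trans hk), mul_div_assoc',
    ← Finset.sum_div] at hk_eq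
  rw [div_eq_iff (by positivity)] at hk_eq
  rw [hk_eq]
  rcases eq_or_ne k 0 with rfl | hk0 <;> simp [*]

end SolvesMomentSystem

end MomentSystem

section ReflectedLaw

/-- The law of `τ * (a - ζ)` for `ζ` of law `μ`. -/
noncomputable def reflectedLaw (μ : Measure ℝ) (τ a : ℝ) : Measure ℝ :=
  μ.map fun z => τ * (a - z)

variable {μ : Measure ℝ}

instance [IsProbabilityMeasure μ] (τ a : ℝ) : IsProbabilityMeasure (reflectedLaw μ τ a) :=
  Measure.isProbabilityMeasure_map (by fun_prop)

lemma integral_reflectedLaw {f : ℝ → ℝ} (hf : Measurable f) (τ a : ℝ) :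
    ∫ y, f y ∂reflectedLaw μ τ a = ∫ z, f (τ * (a - z)) ∂μ :=
  integral_map (by fun_prop) hf.aestronglyMeasurable

lemma memLp_id_reflectedLaw [IsFiniteMeasure μ] {p : ENNReal} (hμ : MemLp id p μ) (τ a : ℝ) :
    MemLp id p (reflectedLaw μ τ a) :=
  (memLp_map_measure_iff (by fun_prop) (by fun_prop)).2 (((memLp_const a).sub hμ).const_mul τ)

variable {ι : Type*} [Fintype ι]

lemma mixtureIntegral_reflectedLaw_pow (u c : ι → ℝ) (τ : ℝ) (k : ℕ) :
    mixtureIntegral u (fun j => reflectedLaw μ τ (c j)) (fun y => y ^ k) =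
      τ ^ k * ∑ j, u j * ∫ z, (c j - z) ^ k ∂μ := by
  have hmeas : Measurable fun y : ℝ => y ^ k := by fun_prop
  simp only [mixtureIntegral, integral_reflectedLaw hmeas, mul_pow, integral_const_mul,
    Finset.mul_sum, mul_left_comm]

lemma mixtureIntegral_reflectedLaw_abs_rpow (u c : ι → ℝ) {τ : ℝ} (hτ : 0 ≤ τ) (α : ℝ) :
    mixtureIntegral u (fun j => reflectedLaw μ τ (c j)) (fun y => |y| ^ α) =
      τ ^ α * ∑ j, u j * ∫ z, |c j - z| ^ α ∂μ := by
  have hmeas : Measurable fun y : ℝ => |y| ^ α := by fun_prop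
  simp only [mixtureIntegral, integral_reflectedLaw hmeas, abs_mul, abs_of_nonneg hτ,
    Real.mul_rpow hτ (abs_nonneg _), integral_const_mul, Finset.mul_sum, mul_left_comm]

lemma mixtureIntegralPi_reflectedLaw [IsProbabilityMeasure μ] {n : ℕ} (u c : ι → ℝ) (τ : ℝ)
    {g : (Fin n → ℝ) → ℝ} (hg : Measurable g) :
    mixtureIntegralPi u (fun j => reflectedLaw μ τ (c j)) g =
      ∑ γ : Fin n → ι, (∏ i, u (γ i)) *
        ∫ z : Fin n → ℝ, g (fun i => τ * (c (γ i) - z i)) ∂(Measure.pi fun _ => μ) := by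
  refine Finset.sum_congr rfl fun γ _ => ?_
  have hmap : (Measure.pi fun i => reflectedLaw μ τ (c (γ i))) =
      (Measure.pi fun _ => μ).map fun (z : Fin n → ℝ) i => τ * (c (γ i) - z i) :=
    (Measure.pi_map_pi (hμ := fun i => inferInstanceAs (SigmaFinite (reflectedLaw μ τ (c (γ i)))))
      fun i => by fun_prop).symm
  have hmeas : Measurable fun (z : Fin n → ℝ) i => τ * (c (γ i) - z i) := by fun_prop
  beta_reduce
  rw [hmap, integral_map hmeas.aemeasurable hg.aestronglyMeasurable]

end ReflectedLaw

section Debiasing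

variable {d l : ℕ} {α : Fin d → ℝ} {μ : Measure ℝ} [IsProbabilityMeasure μ]
  {c : Fin (l + 1) → ℝ}

theorem IsAnisotropicHolder.abs_debiased_sub_le {L : Fin d → ℝ}
    {g : (Fin d → ℝ) → ℝ} {u : Fin (l + 1) → ℝ} (hg : IsAnisotropicHolder d α L g)
    (hα : ∀ i, 0 < α i) (hl : ∀ i, ⌊α i⌋₊ ≤ l) (hμ : ∀ p : NNReal, MemLp id p μ)
    (hu : SolvesMomentSystem μ c u) (x : Fin d → ℝ) {τ : ℝ} (hτ : 0 ≤ τ) :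
    |(∑ γ : Fin d → Fin (l + 1), (∏ i, u (γ i)) *
        ∫ z : Fin d → ℝ, g (fun i => x i + τ * (c (γ i) - z i)) ∂(Measure.pi fun _ => μ)) - g x| ≤
      (∑ j, |u j|) ^ d *
        ∑ i, L i * (∑ j, |u j| * ∫ z, |c j - z| ^ α i ∂μ) * τ ^ α i := by
  have hpow_int (k : ℕ) : Integrable (fun z : ℝ => z ^ k) μ :=
    integrable_pow_of_memLp_id (α := k) le_rfl (by simpa using hμ k)
  have hmom : ∀ k ≤ l,
      mixtureIntegral u (fun j => reflectedLaw μ τ (c j)) (fun y => y ^ k) = 0 ^ k := by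
    intro k hk
    rw [mixtureIntegral_reflectedLaw_pow, hu.sum_mul_integral_pow (fun k _ => hpow_int k) hk,
      ← mul_pow, mul_zero]
  have hbound := hg.abs_mixtureIntegralPi_add_sub_le hα hl
    (fun i j => memLp_id_reflectedLaw (hμ (α i).toNNReal) τ (c j)) hmom x
  have hmeas : Measurable fun y => g (x + y) :=
    ((hg.continuous hα).comp (continuous_const_add x)).measurable
  rw [mixtureIntegralPi_reflectedLaw u c τ hmeas] at hbound
  refine hbound.trans_eq ?_
  simp only [mixtureIntegral_reflectedLaw_abs_rpow _ _ hτ, mul_assoc, mul_comm (τ ^ α _)]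

lemma sum_mul_le_sum_abs_mul_sum {ι : Type*} [Fintype ι] (a : ι → ℝ) {b : ι → ℝ}
    (hb : ∀ i, 0 ≤ b i) : ∑ i, a i * b i ≤ (∑ i, |a i|) * ∑ i, b i := by
  rw [Finset.sum_mul]
  exact Finset.sum_le_sum fun i _ => mul_le_mul (le_abs_self _)
    (Finset.single_le_sum (fun j _ => hb j) (Finset.mem_univ i)) (hb i) (abs_nonneg _)

theorem stmt_10_general (hα : ∀ i, 0 < α i) (hl : ∀ i, ⌊α i⌋₊ ≤ l) (L : Fin d → ℝ)
    (hμ : ∀ p : NNReal, MemLp id p μ) (hc : Function.Injective c) :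
    ∃ C > 0, ∀ g : (Fin d → ℝ) → ℝ, IsAnisotropicHolder d α L g →
      ∀ u : Fin (l + 1) → ℝ, SolvesMomentSystem μ c u →
        ∀ (x : Fin d → ℝ) (τ : ℝ), 0 < τ →
          |(∑ γ : Fin d → Fin (l + 1), (∏ i, u (γ i)) *
              ∫ z : Fin d → ℝ, g (fun i => x i + τ * (c (γ i) - z i))
                ∂(Measure.pi fun _ => μ)) - g x| ≤ C * ∑ i, τ ^ α i := by
  by_cases hsolvable : ∃ v, SolvesMomentSystem μ c v
  swap
  · exact ⟨1, one_pos, fun g _ u hu => (hsolvable ⟨u, hu⟩).elim⟩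
  obtain ⟨v, hv⟩ := hsolvable
  set A : Fin d → ℝ := fun i => L i * ∑ j, |v j| * ∫ z, |c j - z| ^ α i ∂μ
  refine ⟨(∑ j, |v j|) ^ d * ∑ i, |A i| + 1, by positivity, fun g hg u hu x τ hτ => ?_⟩
  have hrate : 0 ≤ ∑ i, τ ^ α i := by positivity
  -- The solution of the system is unique, so the constant built from `v` serves every `u`.
  obtain rfl : u = v := hu.eq hc hv
  calc _ ≤ (∑ j, |u j|) ^ d * ∑ i, A i * τ ^ α i :=
        hg.abs_debiased_sub_le hα hl hμ hu x hτ.le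
    _ ≤ (∑ j, |u j|) ^ d * ((∑ i, |A i|) * ∑ i, τ ^ α i) := by
        gcongr
        exact sum_mul_le_sum_abs_mul_sum A fun i => by positivity
    _ ≤ ((∑ j, |u j|) ^ d * ∑ i, |A i| + 1) * ∑ i, τ ^ α i := by
        rw [add_mul, mul_assoc, one_mul]
        exact le_add_of_nonneg_right hrate

end Debiasing

/-- multivariate debiasing bound. For `g` in the anisotropic Hölder
class and `u` solving the Gaussian moment system, the debiased Gaussian smoothing of
`g` approximates `g` at rate `∑ τ^{α_i}`, with a constant depending only on
`d, l, α, L`. -/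
theorem stmt_10 (d l : ℕ) (hd : 1 ≤ d) (α L : Fin d → ℝ)
    (hα1 : ∀ i, 1 ≤ α i) (hmono : ∀ i j : Fin d, i ≤ j → α i ≤ α j)
    (hl : ∀ i, ⌊α i⌋₊ ≤ l) (hL : ∀ i, 0 < L i) :
    ∃ C > 0, ∀ g : (Fin d → ℝ) → ℝ, IsAnisotropicHolder d α L g →
      ∀ u : Fin (l + 1) → ℝ,
        (∀ k : Fin (l + 1),
          (∑ i : Fin (l + 1), u i *
            ∑ j ∈ Finset.range (k.val + 1),
              (-1 : ℝ) ^ j * (∫ z : ℝ, z ^ j ∂(gaussianReal 0 1)) * (i.val : ℝ) ^ (k.val - j) /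
                ((Nat.factorial j : ℝ) * (Nat.factorial (k.val - j) : ℝ))) =
          if k.val = 0 then 1 else 0) →
        ∀ (x : Fin d → ℝ) (τ : ℝ), 0 < τ →
          |(∑ γ : Fin d → Fin (l + 1), (∏ i : Fin d, u (γ i)) *
              ∫ z : Fin d → ℝ, g (fun i => x i + τ * (((γ i).val : ℝ) - z i))
                ∂(Measure.pi fun _ : Fin d => gaussianReal 0 1)) - g x| ≤
            C * ∑ i : Fin d, τ ^ α i :=
  stmt_10_general (fun i => one_pos.trans_le (hα1 i)) hl L memLp_id_gaussianReal
    (Nat.cast_injective.comp Fin.val_injective)
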